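/- Suppose ρ ∈ (0,1) is irrational and its continued fraction partial quotients satisfy aₙ ≤ n² for all sufficiently large n. Then there exist a constant c' > 0 and an integer q₀ ≥ 3 such that for all integers q ≥ q₀ and all integers p, |p − q·ρ| ≥ c' / ( q·(ln q)²·( ln( q·(ln q)² ) )² ). -/

import Mathlib

/-!
Write `xₙ` for the `n`-th iterate of the Gauss map at `ρ`, and `Dₙ = qₙ ρ - pₙ`. The recurrences
give `Dₙ₊₁ = -xₙ₊₁ Dₙ` and `(qₙ₊₁ + qₙ xₙ₊₁) |Dₙ| = 1`, hence
`1 / (2 qₙ₊₁) ≤ |Dₙ| ≤ 1 / qₙ₊₁`.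

Given `q` and `p`, choose `n` with `qₙ < 2q ≤ qₙ₊₁` and consider the integer
`q pₙ - p qₙ = qₙ (qρ - p) - q Dₙ`. If it is nonzero, then `q |Dₙ| ≤ 1/2` forces
`|qρ - p| ≥ 1 / (2 qₙ) ≥ 1 / (4q)`. If it vanishes, then
`|qρ - p| = (q / qₙ) |Dₙ| ≥ 1 / (4 qₙ₊₁)`. In both cases `|qρ - p| ≥ 1 / (4 qₙ₊₁)`, while
`qₙ₊₁ ≤ (aₙ₊₁ + 1) qₙ ≤ 2 ((n + 1)² + 1) q` for large `n`. Since `qₙ` grows at least like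
`2^(n/2)`, `n` is at most `8 log q`, and the bound `|qρ - p| ≥ 1 / (656 q (log q)²)` follows. This
is stronger than the claim, because `log (q (log q)²) ≥ 1` for `q ≥ 3`.
-/

open MeasureTheory Filter

/-- The Gauss map `x ↦ {1/x}`. -/
noncomputable def gaussMap (x : ℝ) : ℝ := Int.fract (1 / x)

/-- The `n`-th continued fraction partial quotient of `ρ` (for `n ≥ 1`):
`aₙ(ρ) = ⌊1 / G^[n-1] ρ⌋` where `G` is the Gauss map. -/
noncomputable def cfa (ρ : ℝ) (n : ℕ) : ℤ := ⌊1 / (gaussMap^[n - 1] ρ)⌋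

/-- The Diophantine condition (2): `aₙ ≤ n²` for all sufficiently large `n`. -/
def DiophCond (ρ : ℝ) : Prop := ∃ N : ℕ, ∀ n : ℕ, N ≤ n → cfa ρ n ≤ (n : ℤ) ^ 2

/-- Denominators `qₙ` of the continued fraction convergents of `ρ`:
`q₀ = 1`, `q₁ = a₁`, `q_{n+2} = a_{n+2} q_{n+1} + qₙ`. -/
noncomputable def cfq (ρ : ℝ) : ℕ → ℤ
  | 0 => 1
  | 1 => cfa ρ 1
  | n + 2 => cfa ρ (n + 2) * cfq ρ (n + 1) + cfq ρ n

/-- Numerators `pₙ` of the continued fraction convergents of `ρ`: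
`p₀ = 0`, `p₁ = 1`, `p_{n+2} = a_{n+2} p_{n+1} + pₙ`. -/
noncomputable def cfp (ρ : ℝ) : ℕ → ℤ
  | 0 => 0
  | 1 => 1
  | n + 2 => cfa ρ (n + 2) * cfp ρ (n + 1) + cfp ρ n

/-- Distance from a real number to the nearest integer. -/
noncomputable def distNearestInt (t : ℝ) : ℝ := |t - round t|

lemma gauss_iterate_mem {ρ : ℝ} (hρ : ρ ∈ Set.Ioo (0 : ℝ) 1) (hirr : Irrational ρ) (n : ℕ) :
    0 < gaussMap^[n] ρ ∧ gaussMap^[n] ρ < 1 ∧ Irrational (gaussMap^[n] ρ) := by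
  induction n with
  | zero => exact ⟨hρ.1, hρ.2, hirr⟩
  | succ n ih =>
    rw [Function.iterate_succ_apply']
    have h : Irrational (gaussMap (gaussMap^[n] ρ)) := by
      have h1 : Irrational (1 / gaussMap^[n] ρ) := by
        rw [one_div]; exact ih.2.2.inv
      unfold gaussMap Int.fract
      exact h1.sub_intCast _
    exact ⟨lt_of_le_of_ne (Int.fract_nonneg _) (Ne.symm h.ne_zero), Int.fract_lt_one _, h⟩

lemma cfa_add_gauss (ρ : ℝ) (n : ℕ) :
    (cfa ρ (n + 1) : ℝ) + gaussMap^[n + 1] ρ = 1 / gaussMap^[n] ρ := by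
  rw [Function.iterate_succ_apply', cfa, gaussMap, Nat.add_sub_cancel]
  exact Int.floor_add_fract _

lemma one_le_cfa {ρ : ℝ} (hρ : ρ ∈ Set.Ioo (0 : ℝ) 1) (hirr : Irrational ρ) (n : ℕ) :
    1 ≤ cfa ρ (n + 1) := by
  obtain ⟨h0, h1, -⟩ := gauss_iterate_mem hρ hirr n
  rw [cfa, Nat.add_sub_cancel, Int.le_floor, Int.cast_one]
  exact (one_le_div h0).2 h1.le

lemma cfq_pos_mono {ρ : ℝ} (hρ : ρ ∈ Set.Ioo (0 : ℝ) 1) (hirr : Irrational ρ) (n : ℕ) :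
    1 ≤ cfq ρ n ∧ cfq ρ n ≤ cfq ρ (n + 1) := by
  induction n with
  | zero => exact ⟨le_rfl, one_le_cfa hρ hirr 0⟩
  | succ n ih =>
    refine ⟨ih.1.trans ih.2, ?_⟩
    have h := one_le_cfa hρ hirr (n + 1)
    change cfq ρ (n + 1) ≤ cfa ρ (n + 2) * cfq ρ (n + 1) + cfq ρ n
    nlinarith

lemma cfq_monotone {ρ : ℝ} (hρ : ρ ∈ Set.Ioo (0 : ℝ) 1) (hirr : Irrational ρ) :
    Monotone (cfq ρ) :=
  monotone_nat_of_le_succ fun n => (cfq_pos_mono hρ hirr n).2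

/-- Exponential growth of the denominators, from `qₙ₊₂ ≥ qₙ₊₁ + qₙ ≥ 2 qₙ`. -/
lemma two_pow_le_cfq {ρ : ℝ} (hρ : ρ ∈ Set.Ioo (0 : ℝ) 1) (hirr : Irrational ρ) (n : ℕ) :
    (2 : ℤ) ^ n ≤ 2 * cfq ρ n ^ 2 := by
  induction n using Nat.twoStepInduction with
  | zero => simp [cfq]
  | one =>
    have := (cfq_pos_mono hρ hirr 1).1
    nlinarith
  | more n ih _ =>
    have h := one_le_cfa hρ hirr (n + 1)
    have h1 := cfq_pos_mono hρ hirr n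
    have h2 : 2 * cfq ρ n ≤ cfq ρ (n + 2) := by
      change 2 * cfq ρ n ≤ cfa ρ (n + 2) * cfq ρ (n + 1) + cfq ρ n
      nlinarith
    calc (2 : ℤ) ^ (n + 2) = 4 * 2 ^ n := by ring
      _ ≤ 2 * (2 * cfq ρ n) ^ 2 := by linarith
      _ ≤ 2 * cfq ρ (n + 2) ^ 2 := by
        have : 0 ≤ 2 * cfq ρ n := by linarith
        gcongr

lemma cfq_succ_le {ρ : ℝ} (hρ : ρ ∈ Set.Ioo (0 : ℝ) 1) (hirr : Irrational ρ) (n : ℕ) :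
    cfq ρ (n + 1) ≤ (cfa ρ (n + 1) + 1) * cfq ρ n := by
  cases n with
  | zero => simp [cfq]
  | succ n =>
    have h := (cfq_pos_mono hρ hirr n).2
    change cfa ρ (n + 2) * cfq ρ (n + 1) + cfq ρ n ≤ (cfa ρ (n + 2) + 1) * cfq ρ (n + 1)
    linarith

lemma cfD_succ {ρ : ℝ} (hρ : ρ ∈ Set.Ioo (0 : ℝ) 1) (hirr : Irrational ρ) (n : ℕ) :
    (cfq ρ (n + 1) : ℝ) * ρ - cfp ρ (n + 1) =
      -gaussMap^[n + 1] ρ * ((cfq ρ n : ℝ) * ρ - cfp ρ n) := by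
  induction n with
  | zero =>
    have h := cfa_add_gauss ρ 0
    rw [Function.iterate_zero, id, eq_div_iff hρ.1.ne'] at h
    simp only [cfq, cfp, zero_add] at h ⊢
    push_cast
    linear_combination h
  | succ n ih =>
    have h := cfa_add_gauss ρ (n + 1)
    have h0 := (gauss_iterate_mem hρ hirr (n + 1)).1
    rw [eq_div_iff h0.ne'] at h
    simp only [cfq, cfp]
    push_cast
    -- `1 / xₙ₊₁ = aₙ₊₂ + xₙ₊₂` turns the recurrence `Dₙ₊₂ = aₙ₊₂ Dₙ₊₁ + Dₙ` into the claim.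
    linear_combination ((cfa ρ (n + 2) : ℝ) + gaussMap^[n + 2] ρ) * ih
      - ((cfq ρ n : ℝ) * ρ - cfp ρ n) * h

lemma cfq_mul_abs_cfD {ρ : ℝ} (hρ : ρ ∈ Set.Ioo (0 : ℝ) 1) (hirr : Irrational ρ) (n : ℕ) :
    ((cfq ρ (n + 1) : ℝ) + cfq ρ n * gaussMap^[n + 1] ρ) *
      |(cfq ρ n : ℝ) * ρ - cfp ρ n| = 1 := by
  induction n with
  | zero =>
    have h := cfa_add_gauss ρ 0
    rw [Function.iterate_zero, id, eq_div_iff hρ.1.ne'] at h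
    simp only [cfq, cfp, zero_add] at h ⊢
    push_cast
    rw [one_mul, one_mul, sub_zero, abs_of_pos hρ.1, h]
  | succ n ih =>
    have h := cfa_add_gauss ρ (n + 1)
    have h0 := (gauss_iterate_mem hρ hirr (n + 1)).1
    rw [eq_div_iff h0.ne'] at h
    rw [cfD_succ hρ hirr n, abs_mul, abs_neg, abs_of_pos h0]
    simp only [cfq]
    push_cast
    linear_combination ih + (cfq ρ (n + 1) : ℝ) * |(cfq ρ n : ℝ) * ρ - cfp ρ n| * h

/-- If `qₙ < 2q ≤ qₙ₊₁`, then every `|p - qρ|` is at least `1 / (4 qₙ₊₁)`. -/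
lemma approx_lower {ρ : ℝ} (hρ : ρ ∈ Set.Ioo (0 : ℝ) 1) (hirr : Irrational ρ) (n q : ℕ) (p : ℤ)
    (h1 : cfq ρ n < 2 * q) (h2 : 2 * q ≤ cfq ρ (n + 1)) :
    1 ≤ 4 * (cfq ρ (n + 1) : ℝ) * |(p : ℝ) - q * ρ| := by
  obtain ⟨hx0, hx1, -⟩ := gauss_iterate_mem hρ hirr (n + 1)
  have hD := cfq_mul_abs_cfD hρ hirr n
  obtain ⟨hq, hm⟩ := cfq_pos_mono hρ hirr n
  have hqR : (1 : ℝ) ≤ cfq ρ n := by exact_mod_cast hq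
  have hmR : (cfq ρ n : ℝ) ≤ cfq ρ (n + 1) := by exact_mod_cast hm
  have h1R : (cfq ρ n : ℝ) < 2 * q := by exact_mod_cast h1
  have h2R : 2 * (q : ℝ) ≤ cfq ρ (n + 1) := by exact_mod_cast h2
  have key : ((q * cfp ρ n - p * cfq ρ n : ℤ) : ℝ) =
      -(cfq ρ n * ((p : ℝ) - q * ρ)) - q * ((cfq ρ n : ℝ) * ρ - cfp ρ n) := by
    push_cast; ring
  set E := |(cfq ρ n : ℝ) * ρ - cfp ρ n| with hE
  have hE0 : 0 ≤ E := abs_nonneg _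
  set A := |(p : ℝ) - q * ρ| with hA
  have hA0 : 0 ≤ A := abs_nonneg _
  have hxq : (cfq ρ n : ℝ) * gaussMap^[n + 1] ρ ≤ cfq ρ (n + 1) := by nlinarith
  have hxq0 : 0 ≤ (cfq ρ n : ℝ) * gaussMap^[n + 1] ρ := by positivity
  have hEup : (cfq ρ (n + 1) : ℝ) * E ≤ 1 := by nlinarith
  have hElow : 1 ≤ 2 * (cfq ρ (n + 1) : ℝ) * E := by nlinarith
  have hqE : 2 * (q : ℝ) * E ≤ 1 := by nlinarith
  by_cases hz : q * cfp ρ n - p * cfq ρ n = 0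
  · rw [hz, Int.cast_zero] at key
    have h3 : (cfq ρ n : ℝ) * A = q * E := by
      have h4 : (cfq ρ n : ℝ) * ((p : ℝ) - q * ρ) =
          -(q * ((cfq ρ n : ℝ) * ρ - cfp ρ n)) := by linarith
      have h5 := congrArg abs h4
      rw [abs_neg, abs_mul, abs_mul, abs_of_nonneg (by linarith : (0 : ℝ) ≤ cfq ρ n),
        Nat.abs_cast] at h5
      exact h5
    have h6 : E ≤ 2 * A := by
      have : (cfq ρ n : ℝ) * E ≤ cfq ρ n * (2 * A) := by nlinarith
      exact le_of_mul_le_mul_left this (by linarith)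
    nlinarith
  · have h3 : (1 : ℝ) ≤ |((q * cfp ρ n - p * cfq ρ n : ℤ) : ℝ)| := by
      exact_mod_cast Int.one_le_abs hz
    rw [key] at h3
    have h4 := h3.trans (abs_sub _ _)
    rw [abs_neg, abs_mul, abs_mul, abs_of_nonneg (by linarith : (0 : ℝ) ≤ cfq ρ n),
      Nat.abs_cast] at h4
    change 1 ≤ (cfq ρ n : ℝ) * A + q * E at h4
    nlinarith

/-- The logarithmic bound on the index `n` of the last denominator below `2q`. -/
lemma index_le_log {ρ : ℝ} (hρ : ρ ∈ Set.Ioo (0 : ℝ) 1) (hirr : Irrational ρ) (n q : ℕ)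
    (hq : 3 ≤ q) (h1 : cfq ρ n < 2 * q) : (n : ℝ) ≤ 8 * Real.log q := by
  have hqR : (3 : ℝ) ≤ q := by exact_mod_cast hq
  have hg : (2 : ℝ) ^ n ≤ 2 * (cfq ρ n : ℝ) ^ 2 := by exact_mod_cast two_pow_le_cfq hρ hirr n
  have h1R : (cfq ρ n : ℝ) < 2 * q := by exact_mod_cast h1
  have h0 : (1 : ℝ) ≤ cfq ρ n := by exact_mod_cast (cfq_pos_mono hρ hirr n).1
  have h2 : (2 : ℝ) ^ n ≤ (q : ℝ) ^ 4 := by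
    have h9 : (9 : ℝ) ≤ (q : ℝ) ^ 2 := by nlinarith
    calc (2 : ℝ) ^ n ≤ 2 * (2 * q : ℝ) ^ 2 := hg.trans (by gcongr)
      _ = 8 * (q : ℝ) ^ 2 := by ring
      _ ≤ (q : ℝ) ^ 4 := by nlinarith
  have h3 := Real.log_le_log (by positivity) h2
  rw [Real.log_pow, Real.log_pow] at h3
  push_cast at h3
  have := Real.log_two_gt_d9
  have hn : (0 : ℝ) ≤ n := n.cast_nonneg
  nlinarith

/-- under the Diophantine condition (2), there exist `c' > 0` and an
integer `q₀ ≥ 3` such that `|p − q·ρ| ≥ c'/(q·(ln q)²·(ln(q·(ln q)²))²)` for all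
integers `q ≥ q₀` and all integers `p`. -/
theorem stmt_5 (ρ : ℝ) (hρ : ρ ∈ Set.Ioo (0 : ℝ) 1) (hirr : Irrational ρ)
    (hdioph : DiophCond ρ) :
    ∃ c' : ℝ, 0 < c' ∧ ∃ q₀ : ℕ, 3 ≤ q₀ ∧ ∀ q : ℕ, q₀ ≤ q → ∀ p : ℤ,
      c' / ((q : ℝ) * (Real.log q) ^ 2 *
          (Real.log ((q : ℝ) * (Real.log q) ^ 2)) ^ 2) ≤
        |(p : ℝ) - (q : ℝ) * ρ| := by
  obtain ⟨N, hN⟩ := hdioph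
  refine ⟨1 / 656, by norm_num, 3 + (cfq ρ N).toNat, by omega, fun q hq p => ?_⟩
  have hq3 : 3 ≤ q := by omega
  have hqR : (3 : ℝ) ≤ q := by exact_mod_cast hq3
  have hqN : cfq ρ N < 2 * q := by omega
  have hex : ∃ m, 2 * (q : ℤ) ≤ cfq ρ m := by
    refine ⟨4 * q * 2, ?_⟩
    have h := two_pow_le_cfq hρ hirr (4 * q * 2)
    have h1 : ((4 * q : ℕ) : ℤ) < 2 ^ (4 * q) := by
      exact_mod_cast Nat.lt_two_pow_self
    have h2 := (cfq_pos_mono hρ hirr (4 * q * 2)).1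
    rw [pow_mul] at h
    push_cast at h1
    by_contra! hlt
    have h3 : (4 * (q : ℤ)) ^ 2 ≤ (2 ^ (4 * q)) ^ 2 := by gcongr
    nlinarith
  obtain ⟨n, hn1, hn2⟩ : ∃ n, cfq ρ n < 2 * q ∧ 2 * q ≤ cfq ρ (n + 1) := by
    classical
    have hs := Nat.find_spec hex
    have hm := fun m => Nat.find_min hex (m := m)
    cases hk : Nat.find hex with
    | zero =>
      rw [hk] at hs
      simp only [cfq] at hs
      omega
    | succ n =>
      rw [hk] at hs hm
      exact ⟨n, not_le.1 (hm n n.lt_succ_self), hs⟩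
  have hNn : N ≤ n + 1 := by
    by_contra! hlt
    have := cfq_monotone hρ hirr hlt.le
    omega
  have hlow := approx_lower hρ hirr n q p hn1 hn2
  have hidx := index_le_log hρ hirr n q hq3 hn1
  have hL : 1 ≤ Real.log q := by
    rw [Real.le_log_iff_exp_le (by linarith)]
    have := Real.exp_one_lt_d9
    linarith
  have hLL : 1 ≤ Real.log ((q : ℝ) * Real.log q ^ 2) :=
    hL.trans (Real.log_le_log (by linarith)
      (le_mul_of_one_le_right (by linarith) (one_le_pow₀ hL)))
  have hup : (cfq ρ (n + 1) : ℝ) ≤ (((n : ℝ) + 1) ^ 2 + 1) * (2 * q) := by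
    have h : cfq ρ (n + 1) ≤ (((n : ℤ) + 1) ^ 2 + 1) * (2 * q) := by
      have ha := hN (n + 1) hNn
      push_cast at ha
      have h0 := (cfq_pos_mono hρ hirr n).1
      calc _ ≤ _ := cfq_succ_le hρ hirr n
        _ ≤ (((n : ℤ) + 1) ^ 2 + 1) * cfq ρ n := by gcongr
        _ ≤ _ := by gcongr
    exact_mod_cast h
  have hn0 : (0 : ℝ) ≤ n := n.cast_nonneg
  set L := Real.log q
  set M := Real.log ((q : ℝ) * L ^ 2)
  have hsq : ((n : ℝ) + 1) ^ 2 + 1 ≤ 82 * L ^ 2 := by nlinarith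
  have hA0 : 0 ≤ |(p : ℝ) - q * ρ| := abs_nonneg _
  rw [div_le_iff₀ (by positivity)]
  have hmain : 1 ≤ 656 * (|(p : ℝ) - q * ρ| * (q * L ^ 2)) := by
    calc 1 ≤ 4 * (cfq ρ (n + 1) : ℝ) * |(p : ℝ) - q * ρ| := hlow
      _ ≤ 4 * ((82 * L ^ 2) * (2 * q)) * |(p : ℝ) - q * ρ| := by
        gcongr
        exact hup.trans (by gcongr)
      _ = _ := by ring
  have hM : 1 ≤ M ^ 2 := by nlinarith
  have hpos : 0 ≤ |(p : ℝ) - q * ρ| * (q * L ^ 2) := by positivity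
  nlinarith
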